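/- Let Q be the quiver of type Ẽ_6 with vertex set {1,…,7} and arrows 1→2, 2→7, 3→4, 4→7, 5→6, 6→7. Then there exists an element Y of ℚ(x_1,…,x_7) such that for every extending vertex i ∈ {1, 3, 5} and every j ≥ 0 one has Y·X^i_{j+6} = X^i_j + X^i_{j+12}. -/

import Mathlib

/-- Arrow multiplicities of the quiver of type Ẽ_6 with arrows
`1→2, 2→7, 3→4, 4→7, 5→6, 6→7`; the vertex labelled `k ∈ {1,…,7}` corresponds to the
index `k−1` of `Fin 7`. -/
def multE6 (s t : Fin 7) : ℕ :=
  if (s = 0 ∧ t = 1) ∨ (s = 1 ∧ t = 6) ∨ (s = 2 ∧ t = 3) ∨ (s = 3 ∧ t = 6) ∨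
     (s = 4 ∧ t = 5) ∨ (s = 5 ∧ t = 6) then 1 else 0

/-!
Label the three arms of `Ẽ₆` by `ZMod 3` and write `x i` for the sequence at the tip of arm `i`.
The recursion implies that `(x (i - 1) j + x (i + 1) (j + 4)) / x i (j + 2)` depends only on
`i - j` modulo 3. Hence `u k = x (i + k) (j + 2 * k)` satisfies a three-term recurrence
`u k + u (k + 2) = c k * u (k + 1)` whose coefficients have period 3. Its monodromy over a period is
a product of three matrices of determinant one, so by Cayley–Hamilton `u 0 + u 6` is its trace times
`u 3`, and this trace is symmetric in the three coefficients, hence independent of `i` and `j`.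
All divisions are legitimate: a frieze with positive initial values stays positive,
hence nonzero, and the indeterminates are positive when evaluated at `(1, …, 1)`.
-/

section PositiveFractions

variable {A R : Type*} (K : Type*) [CommSemiring A] [CommSemiring R] [PartialOrder R]
  [IsStrictOrderedRing R] [CommSemiring K] [Algebra A K]

/-- The fractions `p / q` in `K` with numerator and denominator positive under `φ`; the equation
`x = p / q` is encoded as `x * q = p`. When `A` embeds into `K`, this submonoid avoids zero, so it
serves to prove that subtraction-free expressions do not vanish. -/
def positiveFractions (φ : A →+* R) : Submonoid K where
  carrier := {x | ∃ p q, 0 < φ p ∧ 0 < φ q ∧ x * algebraMap A K q = algebraMap A K p}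
  one_mem' := ⟨1, 1, by simp, by simp, by simp⟩
  mul_mem' := by
    rintro x y ⟨p, q, hp, hq, hx⟩ ⟨p', q', hp', hq', hy⟩
    refine ⟨p * p', q * q', ?_, ?_, ?_⟩
    · simpa only [map_mul] using mul_pos hp hp'
    · simpa only [map_mul] using mul_pos hq hq'
    · rw [map_mul, map_mul, mul_mul_mul_comm, hx, hy]

variable {K} {φ : A →+* R}

theorem algebraMap_mem_positiveFractions {p : A} (hp : 0 < φ p) :
    algebraMap A K p ∈ positiveFractions K φ :=
  ⟨p, 1, hp, by simp, by simp⟩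

theorem ne_zero_of_mem_positiveFractions [FaithfulSMul A K] {x : K}
    (hx : x ∈ positiveFractions K φ) : x ≠ 0 := by
  obtain ⟨p, q, hp, -, hpq⟩ := hx
  rintro rfl
  have hp₀ : p = 0 := FaithfulSMul.algebraMap_injective A K (by rw [← hpq, zero_mul, map_zero])
  simp [hp₀] at hp

theorem one_add_mem_positiveFractions {x : K} (hx : x ∈ positiveFractions K φ) :
    1 + x ∈ positiveFractions K φ := by
  obtain ⟨p, q, hp, hq, hpq⟩ := hx
  refine ⟨q + p, q, ?_, hq, ?_⟩
  · simpa only [map_add] using add_pos hq hp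
  · rw [add_mul, one_mul, hpq, map_add]

theorem mem_positiveFractions_of_mul_mem {x y : K} (hy : y ∈ positiveFractions K φ)
    (hxy : x * y ∈ positiveFractions K φ) : x ∈ positiveFractions K φ := by
  obtain ⟨p, q, hp, hq, hpq⟩ := hy
  obtain ⟨p', q', hp', hq', hpq'⟩ := hxy
  refine ⟨p' * q, p * q', ?_, ?_, ?_⟩
  · simpa only [map_mul] using mul_pos hp' hq
  · simpa only [map_mul] using mul_pos hp hq'
  · calc x * algebraMap A K (p * q')
        = x * y * algebraMap A K q' * algebraMap A K q := by rw [map_mul, ← hpq]; ring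
      _ = algebraMap A K (p' * q) := by rw [hpq', map_mul]

end PositiveFractions

section Frieze

variable {V K : Type*} [Fintype V] [CommSemiring K] {m : V → V → ℕ} {X : V → ℕ → K}

/-- `X` satisfies the frieze recursion of the quiver with `m s t` arrows from `s` to `t`. -/
def IsFrieze (m : V → V → ℕ) (X : V → ℕ → K) : Prop :=
  ∀ v j, X v (j + 1) * X v j = 1 + (∏ s, X s (j + 1) ^ m s v) * ∏ d, X d j ^ m v d

theorem IsFrieze.mem_of_initial_mem (hX : IsFrieze m X) (hm : WellFounded fun s t ↦ m s t ≠ 0)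
    {S : Submonoid K} (one_add_mem : ∀ x ∈ S, 1 + x ∈ S)
    (mem_of_mul_mem : ∀ x, ∀ y ∈ S, x * y ∈ S → x ∈ S) (hX₀ : ∀ v, X v 0 ∈ S) (v : V) (j : ℕ) :
    X v j ∈ S := by
  induction j generalizing v with
  | zero => exact hX₀ v
  | succ j ih =>
    induction v using hm.induction with
    | _ v ih_source =>
      refine mem_of_mul_mem _ _ (ih v) ?_
      rw [hX v j]
      refine one_add_mem _ (mul_mem (prod_mem fun s _ ↦ ?_) (prod_mem fun d _ ↦ pow_mem (ih d) _))
      by_cases hs : m s v = 0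
      · simpa only [hs, pow_zero] using one_mem S
      · exact pow_mem (ih_source s hs) _

end Frieze

theorem IsFrieze.ne_zero_of_initial_X {V R K : Type*} [Fintype V] [CommSemiring R] [PartialOrder R]
    [IsStrictOrderedRing R] [CommSemiring K] [Algebra (MvPolynomial V R) K]
    [FaithfulSMul (MvPolynomial V R) K] {m : V → V → ℕ} {X : V → ℕ → K} (hX : IsFrieze m X)
    (hm : WellFounded fun s t ↦ m s t ≠ 0)
    (hX₀ : ∀ v, X v 0 = algebraMap (MvPolynomial V R) K (MvPolynomial.X v)) (v : V) (j : ℕ) :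
    X v j ≠ 0 := by
  refine ne_zero_of_mem_positiveFractions (φ := MvPolynomial.eval (1 : V → R))
    (hX.mem_of_initial_mem hm (fun _ ↦ one_add_mem_positiveFractions)
      (fun _ _ ↦ mem_positiveFractions_of_mul_mem) (fun v ↦ ?_) v j)
  rw [hX₀]
  exact algebraMap_mem_positiveFractions (by simp)

/-- The left-hand factor is the trace of the product of the matrices `!![0, 1; -1, c k]` over one
period; these advance `(u k, u (k + 1))` by one step. -/
theorem trace_mul_eq_add_of_periodic_three {R : Type*} [CommRing R] {c u : ℕ → R}
    (hc : Function.Periodic c 3) (hu : ∀ k, c k * u (k + 1) = u k + u (k + 2)) (k : ℕ) :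
    (c k * c (k + 1) * c (k + 2) - (c k + c (k + 1) + c (k + 2))) * u (k + 3) =
      u k + u (k + 6) := by
  have h₃ : c k * u (k + 4) = u (k + 3) + u (k + 5) := hc k ▸ hu (k + 3)
  have h₄ : c (k + 1) * u (k + 5) = u (k + 4) + u (k + 6) := hc (k + 1) ▸ hu (k + 4)
  linear_combination hu k + c k * hu (k + 1) + (c k * c (k + 1) - 1) * hu (k + 2) +
    c (k + 1) * h₃ + h₄

@[to_additive]
theorem prod_zmod_three {M : Type*} [CommMonoid M] (f : ZMod 3 → M) (i : ZMod 3) :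
    ∏ s, f s = f i * f (i + 1) * f (i - 1) := by
  have hi : i + 2 = i - 1 := by decide +revert
  calc ∏ s, f s = ∏ s, f (i + s) := (Equiv.prod_comp (Equiv.addLeft i) f).symm
    _ = f (i + 0) * f (i + 1) * f (i + 2) := Fin.prod_univ_three _
    _ = f i * f (i + 1) * f (i - 1) := by rw [add_zero, hi]

theorem add_one_add_one_zmod_three (i : ZMod 3) : i + 1 + 1 = i - 1 := by
  decide +revert

theorem sub_one_sub_one_zmod_three (i : ZMod 3) : i - 1 - 1 = i + 1 := by
  decide +revert

section E6

variable {K : Type*} [Field K]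

/-- The frieze recursion of `Ẽ₆` for nowhere vanishing sequences: on arm `i` the extending vertex
carries `x i` and the middle vertex `y i`, and the vertex common to the three arms carries `z`. -/
structure IsE6Frieze (x y : ZMod 3 → ℕ → K) (z : ℕ → K) : Prop where
  x_ne_zero : ∀ i j, x i j ≠ 0
  y_ne_zero : ∀ i j, y i j ≠ 0
  z_ne_zero : ∀ j, z j ≠ 0
  x_succ_mul : ∀ i j, x i (j + 1) * x i j = 1 + y i j
  y_succ_mul : ∀ i j, y i (j + 1) * y i j = 1 + x i (j + 1) * z j
  z_succ_mul : ∀ j, z (j + 1) * z j = 1 + ∏ i, y i (j + 1)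

/-- The coefficients of the three-term recurrence that relates the extending vertices of `Ẽ₆`;
for a frieze, `tubeCoeff x (i - j)` equals `(x (i - 1) j + x (i + 1) (j + 4)) / x i (j + 2)`. -/
def tubeCoeff (x : ZMod 3 → ℕ → K) (i : ZMod 3) : K :=
  (x (i - 1) 0 + x (i + 1) 4) / x i 2

/-- The trace of the monodromy of the three-term recurrence with coefficients `tubeCoeff x`. -/
def tubeTrace (x : ZMod 3 → ℕ → K) : K :=
  ∏ s, tubeCoeff x s - ∑ s, tubeCoeff x s

namespace IsE6Frieze

variable {x y : ZMod 3 → ℕ → K} {z : ℕ → K}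

theorem z_succ_mul_arm (h : IsE6Frieze x y z) (i : ZMod 3) (j : ℕ) :
    z (j + 1) * z j = 1 + y i (j + 1) * y (i + 1) (j + 1) * y (i - 1) (j + 1) := by
  rw [h.z_succ_mul, prod_zmod_three _ i]

theorem y_succ_mul_x (h : IsE6Frieze x y z) (i : ZMod 3) (j : ℕ) :
    y i (j + 1) * x i j = x i (j + 2) + z j := by
  apply mul_left_cancel₀ (h.x_ne_zero i (j + 1))
  linear_combination y i (j + 1) * h.x_succ_mul i j + h.y_succ_mul i j - h.x_succ_mul i (j + 1)

theorem y_mul_x_add_two (h : IsE6Frieze x y z) (i : ZMod 3) (j : ℕ) :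
    y i j * x i (j + 2) = x i j + z j := by
  apply mul_left_cancel₀ (h.x_ne_zero i (j + 1))
  linear_combination y i j * h.x_succ_mul i (j + 1) + h.y_succ_mul i j - h.x_succ_mul i j

theorem x_add_three_mul_z (h : IsE6Frieze x y z) (i : ZMod 3) (j : ℕ) :
    x i (j + 3) * z j = y (i + 1) (j + 1) * y (i - 1) (j + 1) + y i j := by
  apply mul_left_cancel₀ (h.y_ne_zero i (j + 1))
  linear_combination z j * h.y_mul_x_add_two i (j + 1) - h.y_succ_mul i j + h.z_succ_mul_arm i j

theorem x_mul_z_succ (h : IsE6Frieze x y z) (i : ZMod 3) (j : ℕ) :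
    x i j * z (j + 1) = y (i + 1) (j + 1) * y (i - 1) (j + 1) + y i (j + 2) := by
  apply mul_left_cancel₀ (h.y_ne_zero i (j + 1))
  linear_combination z (j + 1) * h.y_succ_mul_x i j - h.y_succ_mul i (j + 1) + h.z_succ_mul_arm i j

theorem y_mul_y_mul_y (h : IsE6Frieze x y z) (i : ZMod 3) (j : ℕ) :
    y i j * y i (j + 1) * y i (j + 2) =
      1 + y i j + y i (j + 2) +
        y (i + 1) (j + 1) * y (i - 1) (j + 1) * (1 + y i (j + 1)) := by
  have key : (y i (j + 1) * y i j - 1) * (y i (j + 2) * y i (j + 1) - 1) =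
      (1 + y i (j + 1)) * (1 + y i (j + 1) * y (i + 1) (j + 1) * y (i - 1) (j + 1)) := by
    rw [h.y_succ_mul, h.y_succ_mul i (j + 1), ← h.x_succ_mul, ← h.z_succ_mul_arm]
    ring
  apply mul_left_cancel₀ (h.y_ne_zero i (j + 1))
  linear_combination key

theorem x_mul_add_eq_x_mul_add (h : IsE6Frieze x y z) (i : ZMod 3) (j : ℕ) :
    x i (j + 2) * (x i (j + 1) + x (i - 1) (j + 5)) =
      x (i + 1) (j + 3) * (x (i - 1) j + x (i + 1) (j + 4)) := by
  have hx₅ : x (i - 1) (j + 5) * z (j + 2) =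
      y i (j + 3) * y (i + 1) (j + 3) + y (i - 1) (j + 2) := by
    simpa only [sub_add_cancel, sub_one_sub_one_zmod_three] using
      h.x_add_three_mul_z (i - 1) (j + 2)
  have hx₀ : x (i - 1) j * z (j + 1) =
      y i (j + 1) * y (i + 1) (j + 1) + y (i - 1) (j + 2) := by
    simpa only [sub_add_cancel, sub_one_sub_one_zmod_three] using h.x_mul_z_succ (i - 1) j
  have hy : y (i + 1) (j + 1) * y (i + 1) (j + 2) * y (i + 1) (j + 3) =
      1 + y (i + 1) (j + 1) + y (i + 1) (j + 3) +
        y (i - 1) (j + 2) * y i (j + 2) * (1 + y (i + 1) (j + 2)) := by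
    simpa only [add_sub_cancel_right, add_one_add_one_zmod_three] using
      h.y_mul_y_mul_y (i + 1) (j + 1)
  have hz := h.z_succ_mul_arm i (j + 1)
  apply mul_left_cancel₀ (mul_ne_zero (h.z_ne_zero (j + 1)) (h.z_ne_zero (j + 2)))
  calc z (j + 1) * z (j + 2) * (x i (j + 2) * (x i (j + 1) + x (i - 1) (j + 5)))
      = (y i (j + 2) * y i (j + 1) - 1) *
            (y i (j + 3) * y (i + 1) (j + 3) + y (i - 1) (j + 2)) +
          (1 + y i (j + 2) * y (i + 1) (j + 2) * y (i - 1) (j + 2)) * (1 + y i (j + 1)) := by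
        rw [← hx₅, ← hz, h.y_succ_mul i (j + 1), ← h.x_succ_mul i (j + 1)]
        ring
    _ = (y (i + 1) (j + 3) * y (i + 1) (j + 2) - 1) *
            (y i (j + 1) * y (i + 1) (j + 1) + y (i - 1) (j + 2)) +
          (1 + y i (j + 2) * y (i + 1) (j + 2) * y (i - 1) (j + 2)) *
            (1 + y (i + 1) (j + 3)) := by
        linear_combination y (i + 1) (j + 3) * h.y_mul_y_mul_y i (j + 1) - y i (j + 1) * hy
    _ = z (j + 1) * z (j + 2) * (x (i + 1) (j + 3) * (x (i - 1) j + x (i + 1) (j + 4))) := by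
        rw [← hx₀, ← hz, h.y_succ_mul (i + 1) (j + 2), ← h.x_succ_mul (i + 1) (j + 3)]
        ring

theorem tubeCoeff_mul_x (h : IsE6Frieze x y z) (i : ZMod 3) (j : ℕ) :
    tubeCoeff x (i - j) * x i (j + 2) = x (i - 1) j + x (i + 1) (j + 4) := by
  induction j generalizing i with
  | zero => simpa [tubeCoeff] using div_mul_cancel₀ _ (h.x_ne_zero i 2)
  | succ j ih =>
    obtain ⟨i, rfl⟩ : ∃ i', i = i' + 1 := ⟨i - 1, by ring⟩
    have hcoeff : i + 1 - ((j + 1 : ℕ) : ZMod 3) = i - j := by push_cast; ring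
    rw [hcoeff, add_one_add_one_zmod_three, add_sub_cancel_right]
    apply mul_left_cancel₀ (h.x_ne_zero i (j + 2))
    linear_combination x (i + 1) (j + 3) * ih i - h.x_mul_add_eq_x_mul_add i j

theorem tubeTrace_mul_x (h : IsE6Frieze x y z) (i : ZMod 3) (j : ℕ) :
    tubeTrace x * x i (j + 6) = x i j + x i (j + 12) := by
  let u (k : ℕ) : K := x (i + k) (j + 2 * k)
  let c (k : ℕ) : K := tubeCoeff x (i + 1 - j - k)
  have hu (k : ℕ) : c k * u (k + 1) = u k + u (k + 2) := by
    have hcoeff : i + k + 1 - ((j + 2 * k : ℕ) : ZMod 3) = i + 1 - j - k := by push_cast; ring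
    have hterm := h.tubeCoeff_mul_x (i + k + 1) (j + 2 * k)
    rw [hcoeff, add_sub_cancel_right] at hterm
    convert hterm using 3 <;> push_cast <;> ring
  have three_eq_zero : (3 : ZMod 3) = 0 := rfl
  have six_eq_zero : (6 : ZMod 3) = 0 := rfl
  have hc : Function.Periodic c 3 := fun k ↦ by simp [c, three_eq_zero]
  have htrace : tubeTrace x = c 0 * c 1 * c 2 - (c 0 + c 1 + c 2) := by
    have sub_two (s : ZMod 3) : s - (2 : ℕ) = s + 1 := by decide +revert
    rw [tubeTrace, prod_zmod_three _ (i + 1 - j), sum_zmod_three _ (i + 1 - j)]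
    simp only [c, Nat.cast_zero, Nat.cast_one, sub_zero, sub_two]
    ring
  rw [htrace]
  simpa [u, three_eq_zero, six_eq_zero] using trace_mul_eq_add_of_periodic_three hc hu 0

end IsE6Frieze

theorem IsFrieze.isE6Frieze {X : Fin 7 → ℕ → K} (hX : IsFrieze multE6 X)
    (hX_ne : ∀ v j, X v j ≠ 0) :
    IsE6Frieze ![X 0, X 2, X 4] ![X 1, X 3, X 5] (X 6) := by
  constructor
  case x_ne_zero => intro i; fin_cases i; exacts [hX_ne 0, hX_ne 2, hX_ne 4]
  case y_ne_zero => intro i; fin_cases i; exacts [hX_ne 1, hX_ne 3, hX_ne 5]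
  case z_ne_zero => exact hX_ne 6
  case x_succ_mul =>
    intro i j
    fin_cases i
    · simpa [Fin.prod_univ_seven, multE6] using hX 0 j
    · simpa [Fin.prod_univ_seven, multE6] using hX 2 j
    · simpa [Fin.prod_univ_seven, multE6] using hX 4 j
  case y_succ_mul =>
    intro i j
    fin_cases i
    · simpa [Fin.prod_univ_seven, multE6] using hX 1 j
    · simpa [Fin.prod_univ_seven, multE6] using hX 3 j
    · simpa [Fin.prod_univ_seven, multE6] using hX 5 j
  case z_succ_mul =>
    intro j
    have hprod : ∏ i : ZMod 3, ![X 1, X 3, X 5] i (j + 1) =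
        X 1 (j + 1) * X 3 (j + 1) * X 5 (j + 1) := Fin.prod_univ_three _
    rw [hprod]
    simpa [Fin.prod_univ_seven, multE6] using hX 6 j

end E6

theorem wellFounded_multE6 : WellFounded fun s t ↦ multE6 s t ≠ 0 :=
  Subrelation.wf (r := (· < ·)) (fun {s t} ↦ by decide +revert) wellFounded_lt

theorem stmt_16_general {K : Type*} [Field K] (X : Fin 7 → ℕ → K) (hX : IsFrieze multE6 X)
    (hX_ne : ∀ v j, X v j ≠ 0) :
    ∃ Y : K, ∀ i : Fin 7, (i = 0 ∨ i = 2 ∨ i = 4) →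
      ∀ j : ℕ, Y * X i (j + 6) = X i j + X i (j + 12) := by
  have h := hX.isE6Frieze hX_ne
  refine ⟨tubeTrace ![X 0, X 2, X 4], ?_⟩
  rintro i (rfl | rfl | rfl)
  exacts [h.tubeTrace_mul_x 0, h.tubeTrace_mul_x 1, h.tubeTrace_mul_x 2]

/-- for the above quiver of type Ẽ_6, there is an element `Y` of
`ℚ(x_1,…,x_7)` such that for every extending vertex `i ∈ {1,3,5}` (indices `{0,2,4}`
of `Fin 7`) and every `j ≥ 0` one has `Y·X^i_{j+6} = X^i_j + X^i_{j+12}`. -/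
theorem stmt_16
    (X : Fin 7 → ℕ → FractionRing (MvPolynomial (Fin 7) ℚ))
    (hX0 : ∀ v, X v 0 = algebraMap (MvPolynomial (Fin 7) ℚ)
      (FractionRing (MvPolynomial (Fin 7) ℚ)) (MvPolynomial.X v))
    (hXrec : ∀ v (j : ℕ), X v (j+1) * X v j =
      1 + (∏ s : Fin 7, X s (j+1) ^ multE6 s v) * (∏ d : Fin 7, X d j ^ multE6 v d)) :
    ∃ Y : FractionRing (MvPolynomial (Fin 7) ℚ),
      ∀ i : Fin 7, (i = 0 ∨ i = 2 ∨ i = 4) →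
        ∀ j : ℕ, Y * X i (j + 6) = X i j + X i (j + 12) :=
  stmt_16_general X hXrec (IsFrieze.ne_zero_of_initial_X hXrec wellFounded_multE6 hX0)
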